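/- Let n, m ≥ 0 with n + m ≥ 1, let i₁,…,iₙ ∈ {1,2,3} with i_k ≠ i_{k+1} for all 1 ≤ k < n, and let j₁,…,jₘ ∈ {4,5,6} with j_k ≠ j_{k+1} for all 1 ≤ k < m. Then f_{i₁} ∘ ⋯ ∘ f_{iₙ} ∘ f_{j₁} ∘ ⋯ ∘ f_{jₘ} ≠ id on A^ℤ. Consequently the subgroup of bijections of A^ℤ generated by {f_i : 1 ≤ i ≤ 6} is isomorphic to (ℤ₂ * ℤ₂ * ℤ₂) × (ℤ₂ * ℤ₂ * ℤ₂). -/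

import Mathlib

/-!
The map `g i` transposes `a i` and `ã i` exactly when the right neighbour satisfies a condition
(`trig`) which is blind to the difference between `a i` and `ã i`, and also to the difference
between `a j` and `ã j` for `j` in the other group of three. Hence every `f i` is an involution, and
the `f i` with `i ≤ 3` commute with the `f j` with `j ≥ 4`.

For freeness, let `l₀ l₁ ⋯ lₙ` be a reduced word in one group of three, the last letter acting
first, and apply it to a point reading `⋯ ã l₀ ã l₁ ⋯ ã lₙ # ⋯`. The sign `#` lets `f lₙ` turn
`ã lₙ` into `a lₙ`; since the next letter `lₙ₋₁` is different from `lₙ`, this `a lₙ` lets it turn its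
own symbol into `a lₙ₋₁`, and so on. Tilde symbols trigger nothing, so no symbol moves before this
front reaches it, and in the end `ã l₀` has become `a l₀` (`front`). A word `I ++ J` mixing both
groups is handled by a point adapted to `I`, or to `J` if `I` is empty (`fcomp_ne_id`).

The involutions therefore define a homomorphism from `(ℤ₂ * ℤ₂ * ℤ₂) × (ℤ₂ * ℤ₂ * ℤ₂)` to the
permutations of `A^ℤ` (`prodHom`). Its range is the subgroup in question, and by the normal form in
free products its kernel is trivial.
-/

/-- The alphabet: 13 symbols, `a i` for `1 ≤ i ≤ 6` are positions `0..5`,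
`ta i` (the tilde symbols) are positions `6..11`, and `hash` is position `12`. -/
abbrev A : Type := Fin 13

def a (i : ℕ) : A := if h : 1 ≤ i ∧ i ≤ 6 then ⟨i - 1, by omega⟩ else ⟨0, by omega⟩

def ta (i : ℕ) : A := if h : 1 ≤ i ∧ i ≤ 6 then ⟨i + 5, by omega⟩ else ⟨0, by omega⟩

def hash : A := ⟨12, by omega⟩

/-- The two-sided shift. -/
def shiftZ {B : Type*} (x : ℤ → B) : ℤ → B := fun n => x (n + 1)

/-- The one-sided shift. -/
def shift1 {B : Type*} (x : ℕ → B) : ℕ → B := fun n => x (n + 1)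

open Classical in
/-- The map `g i : A × A → A`. -/
noncomputable def g (i : ℕ) (b c : A) : A :=
  if b = a i ∧ (c = hash ∨ ∃ j : ℕ, (if i ≤ 3 then 1 else 4) ≤ j ∧
      j ≤ (if i ≤ 3 then 3 else 6) ∧ j ≠ i ∧ c = a j) then ta i
  else if b = ta i ∧ (c = hash ∨ ∃ j : ℕ, (if i ≤ 3 then 1 else 4) ≤ j ∧
      j ≤ (if i ≤ 3 then 3 else 6) ∧ j ≠ i ∧ c = a j) then a i
  else b

/-- The map `f i : A^ℤ → A^ℤ`, `f i x k = g i (x k) (x (k+1))`. -/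
noncomputable def f (i : ℕ) : (ℤ → A) → (ℤ → A) := fun x k => g i (x k) (x (k + 1))

/-- A (two-sided) subshift: nonempty, closed and shift-invariant. -/
def IsSubshift {B : Type*} [TopologicalSpace B] (X : Set (ℤ → B)) : Prop :=
  X.Nonempty ∧ IsClosed X ∧ shiftZ '' X = X

/-- The cylinder `[#w#]`. -/
def cyl (w : List A) : Set (ℤ → A) :=
  {x | x 0 = hash ∧ (∀ k : ℕ, k < w.length → x (1 + (k : ℤ)) = w.getD k hash) ∧
    x (1 + (w.length : ℤ)) = hash}

/-- The word map `f i *` representing `f i`. -/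
noncomputable def fstar (i : ℕ) : List A → List A
  | [] => []
  | [b] => [g i b hash]
  | b :: c :: rest => g i b c :: fstar i (c :: rest)

/-- Composition `f_{l₀} ∘ f_{l₁} ∘ ⋯`. -/
noncomputable def fcomp (l : List ℕ) : (ℤ → A) → (ℤ → A) :=
  l.foldr (fun i F => f i ∘ F) id

/-- The binary code word of length 22 associated to each symbol. -/
def rhoWord (s : A) : List Bool :=
  if (s : ℕ) < 6 then
    [true, true, false, true, false, false] ++ List.replicate (2 * (6 - (s : ℕ))) false
      ++ [true, true] ++ List.replicate (2 * ((s : ℕ) + 1)) false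
  else if (s : ℕ) < 12 then
    [true, true, false, true, false, false, true, true]
      ++ List.replicate (2 * (11 - (s : ℕ))) false
      ++ [true, true] ++ List.replicate (2 * ((s : ℕ) - 5)) false
  else List.replicate 10 true ++ [false, true] ++ List.replicate 10 true

/-- `rho s r` is the `r`-th letter of the code word of `s`. -/
def rho (s : A) (r : ℕ) : Bool := (rhoWord s).getD r false

/-- `ρ⁺(x)` : the concatenation `ρ(x 0) ρ(x 1) ρ(x 2) ⋯`. -/
def rhoPlus (x : ℤ → A) : ℕ → Bool := fun n => rho (x ((n / 22 : ℕ) : ℤ)) (n % 22)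

/-- `φ(X) = ⋃_{0 ≤ n < 22} Sⁿ({ρ⁺(x) : x ∈ X})`. -/
def phi (X : Set (ℤ → A)) : Set (ℕ → Bool) :=
  ⋃ n < 22, shift1^[n] '' (rhoPlus '' X)

/-! ### The local rules -/

/-- The condition on the right neighbour under which `g i` acts: `c` is `#` or a letter `a j` of
the same group of three as `i`, with `j ≠ i`. Recall that `a j` has numerical value `j - 1`. -/
def trig (i : ℕ) (c : A) : Bool :=
  c = hash ∨ ((if i ≤ 3 then (c : ℕ) < 3 else 3 ≤ (c : ℕ) ∧ (c : ℕ) < 6) ∧ (c : ℕ) + 1 ≠ i)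

/-- The condition written out in the definition of `g` agrees with `trig`. -/
lemma trig_iff (i : ℕ) (c : A) :
    (c = hash ∨ ∃ j : ℕ, (if i ≤ 3 then 1 else 4) ≤ j ∧
      j ≤ (if i ≤ 3 then 3 else 6) ∧ j ≠ i ∧ c = a j) ↔ trig i c = true := by
  have ha : ∀ j, 1 ≤ j → j ≤ 6 → (c = a j ↔ (c : ℕ) + 1 = j) := by
    intro j h1 h2
    simp only [a, h1, h2, and_self, dif_pos, Fin.ext_iff]
    omega
  simp only [trig, decide_eq_true_eq]
  refine or_congr_right ⟨?_, ?_⟩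
  · rintro ⟨j, h1, h2, h3, h4⟩
    rw [ha j (by split_ifs at h1 <;> omega) (by split_ifs at h2 <;> omega)] at h4
    split_ifs at * <;> omega
  · rintro ⟨h1, h2⟩
    refine ⟨c + 1, ?_, ?_, h2, (ha _ (by omega) ?_).2 rfl⟩ <;> split_ifs at * <;> omega

/-- `g i` is the conditional transposition of `a i` and `ã i`. -/
lemma g_eq (i : ℕ) (b c : A) :
    g i b c = if trig i c then Equiv.swap (a i) (ta i) b else b := by
  unfold g
  simp only [trig_iff, Equiv.swap_apply_def]
  split_ifs <;> simp_all

/-- Transposing `a j` and `ã j` does not affect the condition for `g i` when `j = i`, or when `i`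
and `j` lie in different groups of three. Involutivity and commutation both rest on this. -/
lemma trig_swap {i j : ℕ} (hi : 1 ≤ i ∧ i ≤ 6) (hj : 1 ≤ j ∧ j ≤ 6)
    (hij : i = j ∨ (i ≤ 3 ↔ ¬ j ≤ 3)) (c : A) :
    trig i (Equiv.swap (a j) (ta j) c) = trig i c := by
  obtain ⟨hi1, hi2⟩ := hi
  obtain ⟨hj1, hj2⟩ := hj
  interval_cases i <;> interval_cases j <;> first | omega | (revert c; decide)

lemma trig_g {i j : ℕ} (hi : 1 ≤ i ∧ i ≤ 6) (hj : 1 ≤ j ∧ j ≤ 6)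
    (hij : i = j ∨ (i ≤ 3 ↔ ¬ j ≤ 3)) (c d : A) :
    trig i (g j c d) = trig i c := by
  rw [g_eq j]
  split_ifs
  · exact trig_swap hi hj hij c
  · rfl

lemma f_involutive {i : ℕ} (h : 1 ≤ i ∧ i ≤ 6) : Function.Involutive (f i) := by
  intro x
  funext k
  change g i (g i _ _) (g i _ _) = _
  rw [g_eq i, trig_g h h (.inl rfl), g_eq i (x k)]
  split_ifs <;> simp

lemma swap_comm' {i j : ℕ} (hi : 1 ≤ i ∧ i ≤ 3) (hj : 4 ≤ j ∧ j ≤ 6) (b : A) :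
    Equiv.swap (a i) (ta i) (Equiv.swap (a j) (ta j) b) =
      Equiv.swap (a j) (ta j) (Equiv.swap (a i) (ta i) b) := by
  obtain ⟨hi1, hi2⟩ := hi
  obtain ⟨hj1, hj2⟩ := hj
  interval_cases i <;> interval_cases j <;> (revert b; decide)

lemma f_comm {i j : ℕ} (hi : 1 ≤ i ∧ i ≤ 3) (hj : 4 ≤ j ∧ j ≤ 6) (x : ℤ → A) :
    f i (f j x) = f j (f i x) := by
  have hi' : 1 ≤ i ∧ i ≤ 6 := by omega
  have hj' : 1 ≤ j ∧ j ≤ 6 := by omega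
  funext k
  change g i (g j _ _) (g j _ _) = g j (g i _ _) (g i _ _)
  rw [g_eq i, trig_g hi' hj' (by omega), g_eq j (g i _ _), trig_g hj' hi' (by omega),
    g_eq i (x k), g_eq j (x k)]
  split_ifs <;> simp [swap_comm' hi hj]

lemma f_fix {j : ℕ} {x : ℤ → A} (hx : ∀ k, x k ≠ a j ∧ x k ≠ ta j) :
    f j x = x := by
  funext k
  change g j _ _ = _
  rw [g_eq j, Equiv.swap_apply_of_ne_of_ne (hx k).1 (hx k).2, ite_self]

lemma fcomp_fix {J : List ℕ} {x : ℤ → A} (h : ∀ j ∈ J, f j x = x) : fcomp J x = x := by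
  induction J with
  | nil => rfl
  | cons j J ih =>
    change f j (fcomp J x) = x
    rw [ih fun k hk => h k (by simp [hk])]
    exact h j (by simp)

lemma fcomp_append (I J : List ℕ) (x : ℤ → A) : fcomp (I ++ J) x = fcomp I (fcomp J x) := by
  induction I with
  | nil => rfl
  | cons i I ih => exact congrArg (f i) ih

/-! ### Reduced words act nontrivially -/

/-- Tilde symbols never trigger a change. -/
lemma trig_ta {i j : ℕ} (hi : 1 ≤ i ∧ i ≤ 6) (hj : 1 ≤ j ∧ j ≤ 6) : trig i (ta j) = false := by
  obtain ⟨hi1, hi2⟩ := hi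
  obtain ⟨hj1, hj2⟩ := hj
  interval_cases i <;> interval_cases j <;> decide

lemma trig_a {i j : ℕ} (hi : 1 ≤ i ∧ i ≤ 6) (hj : 1 ≤ j ∧ j ≤ 6) (hij : i ≤ 3 ↔ j ≤ 3)
    (hne : i ≠ j) : trig i (a j) = true := by
  obtain ⟨hi1, hi2⟩ := hi
  obtain ⟨hj1, hj2⟩ := hj
  interval_cases i <;> interval_cases j <;> first | omega | decide

/-- The front propagates: suppose `x` reads `ã l₀ ã l₁ ⋯ #` from position `p` on, where
`L = [l₀, l₁, …]` is a reduced word in one group of three, and only tilde symbols occur to the left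
of `p`. Then `fcomp L` turns the symbol at `p` into `a l₀` (it leaves `#` there if `L` is empty) and
has not yet touched anything to the left of `p`. Each letter moves the front one step left. -/
lemma front {c d : ℕ} (hc : 1 ≤ c ∧ d ≤ 6 ∧ (d ≤ 3 ∨ 4 ≤ c)) {x : ℤ → A} (L : List ℕ) :
    ∀ p : ℤ, (∀ i ∈ L, c ≤ i ∧ i ≤ d) → L.IsChain (· ≠ ·) →
      (∀ r < p, ∃ j, 1 ≤ j ∧ j ≤ 6 ∧ x r = ta j) →
      (∀ k : ℕ, x (p + k) = (L.map ta).getD k hash) →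
      fcomp L x p = (L.map a).headD hash ∧ ∀ r < p, fcomp L x r = x r := by
  induction L with
  | nil => intro p _ _ _ h; exact ⟨by simpa [fcomp] using h 0, fun _ _ => rfl⟩
  | cons l L ih =>
    intro p hL hch hr hx
    have hl : 1 ≤ l ∧ l ≤ 6 := by have := hL l (by simp); omega
    have hp : x p = ta l := by simpa using hx 0
    have hr' : ∀ r < p + 1, ∃ j, 1 ≤ j ∧ j ≤ 6 ∧ x r = ta j := by
      intro r h
      rcases (Int.lt_add_one_iff.1 h).lt_or_eq with h | rfl
      · exact hr r h
      · exact ⟨l, hl.1, hl.2, hp⟩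
    obtain ⟨h1, h2⟩ := ih (p + 1) (fun i hi => hL i (by simp [hi])) hch.tail hr' (fun k => by
      have := hx (k + 1)
      rw [List.map_cons, List.getD_cons_succ] at this
      rw [← this]; push_cast; ring_nf)
    constructor
    · change g l (fcomp L x p) (fcomp L x (p + 1)) = a l
      have ht : trig l ((L.map a).headD hash) = true := by
        cases L with
        | nil => simp [trig]
        | cons m L =>
          have hm := hL m (by simp)
          have hl' := hL l (by simp)
          exact trig_a hl (by omega) (by omega) (List.isChain_cons_cons.1 hch).1
      rw [h1, h2 p (by omega), hp, g_eq l, ht]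
      simp
    · intro r h
      change g l (fcomp L x r) (fcomp L x (r + 1)) = x r
      obtain ⟨j, hj1, hj2, hj⟩ := hr' (r + 1) (by omega)
      rw [h2 r (by omega), h2 (r + 1) (by omega), hj, g_eq l, trig_ta hl ⟨hj1, hj2⟩]
      simp

lemma a_ne_ta {i j : ℕ} (hi : 1 ≤ i ∧ i ≤ 6) (hj : 1 ≤ j ∧ j ≤ 6) : a i ≠ ta j := by
  simp only [a, ta, hi, hj, and_self, dif_pos, ne_eq, Fin.mk.injEq]
  omega

lemma ta_ne_ta {i j : ℕ} (hi : 1 ≤ i ∧ i ≤ 6) (hj : 1 ≤ j ∧ j ≤ 6) (h : i ≠ j) :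
    ta i ≠ ta j := by
  simp only [ta, hi, hj, and_self, dif_pos, ne_eq, Fin.mk.injEq]
  omega

lemma hash_ne {j : ℕ} (hj : 1 ≤ j ∧ j ≤ 6) : hash ≠ a j ∧ hash ≠ ta j := by
  simp only [a, ta, _root_.hash, hj, and_self, dif_pos, ne_eq, Fin.mk.injEq]
  omega

/-- A nonempty reduced word in one group of three moves a point built only from `#` and the tilde
symbols of its own letters. -/
lemma exists_moved {c d : ℕ} (hc : 1 ≤ c ∧ d ≤ 6 ∧ (d ≤ 3 ∨ 4 ≤ c)) {L : List ℕ} (hne : L ≠ [])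
    (hL : ∀ i ∈ L, c ≤ i ∧ i ≤ d) (hch : L.IsChain (· ≠ ·)) :
    ∃ x : ℤ → A, fcomp L x ≠ x ∧ ∀ k, x k = hash ∨ ∃ i ∈ L, x k = ta i := by
  obtain ⟨l, L, rfl⟩ := List.exists_cons_of_ne_nil hne
  have hl : 1 ≤ l ∧ l ≤ 6 := by have := hL l (by simp); omega
  -- The symbol left of the origin only has to be a tilde symbol belonging to the word.
  let x : ℤ → A := fun k => if k < 0 then ta l else ((l :: L).map ta).getD k.toNat hash
  have h := (front hc (x := x) (l :: L) 0 hL hch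
    (fun r hr => ⟨l, hl.1, hl.2, by simp [x, hr]⟩) (fun k => by simp [x])).1
  refine ⟨x, fun h' => ?_, fun k => ?_⟩
  · rw [h'] at h
    exact a_ne_ta hl hl (by simpa [x] using h.symm)
  · by_cases hk : k < 0
    · exact .inr ⟨l, by simp, by simp [x, hk]⟩
    · by_cases hk' : k.toNat < ((l :: L).map ta).length
      · right
        have hx : x k = ((l :: L).map ta)[k.toNat] := by
          simp only [x, hk, if_false]
          exact List.getD_eq_getElem _ _ hk'
        rw [hx, List.getElem_map]
        exact ⟨_, List.getElem_mem _, rfl⟩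
      · left
        simp only [x, hk, if_false]
        exact List.getD_eq_default _ _ (by omega)

/-- Words in the second group fix every point whose symbols are `#` and the `ã i` with `i ≤ 3`, so
the word `I`, when nonempty, moves such a point without interference from `J`. -/
lemma fcomp_ne_id (I J : List ℕ) (hlen : 1 ≤ I.length + J.length)
    (hI : ∀ i ∈ I, 1 ≤ i ∧ i ≤ 3) (hI' : I.IsChain (· ≠ ·))
    (hJ : ∀ j ∈ J, 4 ≤ j ∧ j ≤ 6) (hJ' : J.IsChain (· ≠ ·)) : fcomp (I ++ J) ≠ id := by
  intro h
  by_cases hn : I = []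
  · subst hn
    have hn : J ≠ [] := by rintro rfl; simp at hlen
    obtain ⟨x, hx, -⟩ := exists_moved (by omega) hn hJ hJ'
    exact hx (congrFun h x)
  · obtain ⟨x, hx, hx'⟩ := exists_moved (by omega) hn hI hI'
    apply hx
    have hfix : fcomp J x = x := by
      refine fcomp_fix fun j hj => ?_
      have hj := hJ j hj
      refine f_fix fun k => ?_
      rcases hx' k with hk | ⟨i, hi, hk⟩
      · rw [hk]
        exact hash_ne (by omega)
      · have hi := hI i hi
        rw [hk]
        exact ⟨(a_ne_ta (by omega) (by omega)).symm, ta_ne_ta (by omega) (by omega) (by omega)⟩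
    have := congrFun h x
    rwa [fcomp_append, hfix] at this

/-! ### The homomorphism from the product of free products -/

/-- The involution `f i` as a permutation of `A^ℤ`. -/
noncomputable def tog (i : ℕ) (h : 1 ≤ i ∧ i ≤ 6) : Equiv.Perm (ℤ → A) :=
  (f_involutive h).toPerm

/-- The homomorphism from `ℤ₂`, written multiplicatively, sending the generator to an element `s`
with `s * s = 1`. -/
def involHom {G : Type*} [Group G] (s : G) (hs : s * s = 1) : Multiplicative (ZMod 2) →* G where
  toFun m := if m = 1 then 1 else s
  map_one' := if_pos rfl
  map_mul' := by
    have key : ∀ m n : Multiplicative (ZMod 2),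
        (m = 1 ∧ m * n = n) ∨ (n = 1 ∧ m * n = m) ∨ (m ≠ 1 ∧ n ≠ 1 ∧ m * n = 1) := by decide
    intro m n
    rcases key m n with ⟨h, h'⟩ | ⟨h, h'⟩ | ⟨h, h', h''⟩
    · rw [h', if_pos h, one_mul]
    · rw [h', if_pos h, mul_one]
    · rw [h'', if_pos rfl, if_neg h, if_neg h', hs]

lemma involHom_apply {G : Type*} [Group G] {s : G} {hs : s * s = 1}
    {m : Multiplicative (ZMod 2)} (hm : m ≠ 1) : involHom s hs m = s := if_neg hm

lemma involHom_mem {G : Type*} [Group G] {s : G} {hs : s * s = 1}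
    (m : Multiplicative (ZMod 2)) {H : Subgroup G} (h : s ∈ H) : involHom s hs m ∈ H := by
  by_cases hm : m = 1
  · rw [hm, map_one]; exact H.one_mem
  · rwa [involHom_apply hm]

/-- The homomorphism `ℤ₂ * ℤ₂ * ℤ₂ → Perm (A^ℤ)` sending the three generators to `f (e + 1)`,
`f (e + 2)`, `f (e + 3)`. The two groups of three correspond to `e = 0` and `e = 3`. -/
noncomputable def freeHom (e : ℕ) (he : e ≤ 3) :
    Monoid.CoprodI (fun _ : Fin 3 => Multiplicative (ZMod 2)) →* Equiv.Perm (ℤ → A) :=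
  Monoid.CoprodI.lift fun k : Fin 3 =>
    involHom (tog (k + 1 + e) (by omega))
      (Equiv.ext fun x => f_involutive (i := k + 1 + e) (by omega) x)

lemma freeHom_of {e : ℕ} {he : e ≤ 3} (k : Fin 3) (m : Multiplicative (ZMod 2)) :
    freeHom e he (Monoid.CoprodI.of (i := k) m) =
      involHom (tog (k + 1 + e) (by omega))
        (Equiv.ext fun x => f_involutive (i := k + 1 + e) (by omega) x) m :=
  Monoid.CoprodI.lift_of (M := fun _ : Fin 3 => Multiplicative (ZMod 2)) _ m

lemma freeHom_commute (u v : Monoid.CoprodI (fun _ : Fin 3 => Multiplicative (ZMod 2))) :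
    Commute (freeHom 0 (by omega) u) (freeHom 3 le_rfl v) := by
  have h1 : (freeHom 0 (by omega)).range ≤ Subgroup.centralizer (freeHom 3 le_rfl).range := by
    refine Monoid.CoprodI.lift_range_le _ _ fun k => ?_
    rintro _ ⟨m, rfl⟩
    refine involHom_mem m ?_
    rw [Subgroup.mem_centralizer_iff]
    intro y hy
    have h2 : (freeHom 3 le_rfl).range ≤
        Subgroup.centralizer {tog (k + 1 + 0) (by omega)} := by
      refine Monoid.CoprodI.lift_range_le _ _ fun l => ?_
      rintro _ ⟨m, rfl⟩
      refine involHom_mem m ?_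
      rw [Subgroup.mem_centralizer_singleton_iff]
      exact Equiv.ext fun x => (f_comm (by omega) (by omega) x).symm
    exact Subgroup.mem_centralizer_singleton_iff.1 (h2 hy)
  exact (h1 ⟨u, rfl⟩ _ ⟨v, rfl⟩).symm

/-- The normal form in the free product, read through `freeHom`: since `ℤ₂` has a single nontrivial
element, a reduced word is just a list of indices without repeated neighbours. -/
lemma exists_reduced (e : ℕ) (he : e ≤ 3)
    (u : Monoid.CoprodI (fun _ : Fin 3 => Multiplicative (ZMod 2))) :
    ∃ I : List ℕ, (∀ i ∈ I, e + 1 ≤ i ∧ i ≤ e + 3) ∧ I.IsChain (· ≠ ·) ∧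
      ⇑(freeHom e he u) = fcomp I ∧ (I = [] → u = 1) := by
  classical
  let w := Monoid.CoprodI.Word.equiv u
  have hw : w.prod = u := Monoid.CoprodI.Word.equiv.symm_apply_apply u
  refine ⟨w.toList.map fun p => (p.1 : ℕ) + 1 + e, ?_, ?_, ?_, ?_⟩
  · simp only [List.mem_map]
    rintro _ ⟨p, -, rfl⟩
    omega
  · rw [List.isChain_map]
    exact w.chain_ne.imp fun p q h h' => h (Fin.ext (by omega))
  · rw [← hw, Monoid.CoprodI.Word.prod]
    have hne := w.ne_one
    generalize w.toList = l at hne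
    induction l with
    | nil => simp [fcomp]
    | cons p l ih =>
      rw [List.map_cons, List.prod_cons, map_mul, freeHom_of,
        involHom_apply (hne p (by simp)), Equiv.Perm.coe_mul,
        ih fun q hq => hne q (by simp [hq])]
      rfl
  · intro h
    rw [← hw, Monoid.CoprodI.Word.prod, List.map_eq_nil_iff.1 h]
    rfl

/-- The homomorphism from the product given by the two commuting groups of three. -/
noncomputable def prodHom :
    Monoid.CoprodI (fun _ : Fin 3 => Multiplicative (ZMod 2)) ×
      Monoid.CoprodI (fun _ : Fin 3 => Multiplicative (ZMod 2)) →* Equiv.Perm (ℤ → A) :=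
  (freeHom 0 (by omega)).noncommCoprod (freeHom 3 le_rfl) freeHom_commute

lemma prodHom_injective : Function.Injective prodHom := by
  rw [injective_iff_map_eq_one]
  rintro ⟨u, v⟩ h
  obtain ⟨I, hI, hI', hIu, hu⟩ := exists_reduced 0 (by omega) u
  obtain ⟨J, hJ, hJ', hJv, hv⟩ := exists_reduced 3 le_rfl v
  have hid : fcomp (I ++ J) = id := by
    funext x
    rw [fcomp_append, ← hIu, ← hJv]
    exact congrArg (fun σ : Equiv.Perm (ℤ → A) => σ x) h
  have hlen : ¬ 1 ≤ I.length + J.length := fun hl => fcomp_ne_id I J hl hI hI' hJ hJ' hid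
  rw [hu (List.eq_nil_of_length_eq_zero (by omega)),
    hv (List.eq_nil_of_length_eq_zero (by omega))]
  rfl

lemma prodHom_range : prodHom.range =
    Subgroup.closure {σ : Equiv.Perm (ℤ → A) | ∃ i : ℕ, 1 ≤ i ∧ i ≤ 6 ∧ ⇑σ = f i} := by
  rw [prodHom, MonoidHom.noncommCoprod_range]
  apply le_antisymm
  · refine sup_le ?_ ?_ <;>
    · refine Monoid.CoprodI.lift_range_le _ _ fun k => ?_
      rintro _ ⟨m, rfl⟩
      exact involHom_mem m (Subgroup.subset_closure ⟨_, by omega, by omega, rfl⟩)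
  · rw [Subgroup.closure_le]
    rintro σ ⟨i, h1, h6, hσ⟩
    have gen : ∀ (e : ℕ) (he : e ≤ 3) (k : Fin 3), i = k + 1 + e → σ ∈ (freeHom e he).range := by
      rintro e he k rfl
      refine ⟨Monoid.CoprodI.of (i := k) (Multiplicative.ofAdd 1), ?_⟩
      rw [freeHom_of, involHom_apply (by decide)]
      exact DFunLike.coe_injective hσ.symm
    by_cases h3 : i ≤ 3
    · exact Subgroup.mem_sup_left (gen 0 (by omega) ⟨i - 1, by omega⟩ (by simp; omega))
    · exact Subgroup.mem_sup_right (gen 3 le_rfl ⟨i - 4, by omega⟩ (by simp; omega))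

/-- Every nontrivial reduced word `f_{i₁} ∘ ⋯ ∘ f_{iₙ} ∘ f_{j₁} ∘ ⋯ ∘ f_{jₘ}` with
`i`'s in `{1,2,3}` and `j`'s in `{4,5,6}` is different from the identity; consequently
the subgroup of bijections of `A^ℤ` generated by `{f i : 1 ≤ i ≤ 6}` is isomorphic to
`(ℤ₂ * ℤ₂ * ℤ₂) × (ℤ₂ * ℤ₂ * ℤ₂)`. -/
theorem stmt5 :
    (∀ I J : List ℕ, 1 ≤ I.length + J.length →
      (∀ i ∈ I, 1 ≤ i ∧ i ≤ 3) → I.Chain' (· ≠ ·) →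
      (∀ j ∈ J, 4 ≤ j ∧ j ≤ 6) → J.Chain' (· ≠ ·) →
      fcomp (I ++ J) ≠ id) ∧
    Nonempty
      ((Subgroup.closure {σ : Equiv.Perm (ℤ → A) | ∃ i : ℕ, 1 ≤ i ∧ i ≤ 6 ∧ ⇑σ = f i}) ≃*
        (Monoid.CoprodI (fun _ : Fin 3 => Multiplicative (ZMod 2)) ×
          Monoid.CoprodI (fun _ : Fin 3 => Multiplicative (ZMod 2)))) := by
  refine ⟨fcomp_ne_id, ?_⟩
  rw [← prodHom_range]
  exact ⟨(MonoidHom.ofInjective prodHom_injective).symm⟩
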